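/- Let 0<c₁<⋯<c_m be non-integer reals. There exists a constant C>0 depending only on c₁,…,c_m, m with the following property: for every real N≥1, every δ∈(0,1], and all ξ₁,…,ξ_m∈[−1/2,1/2), if δ ≤ | (1/N) ∑_{n=1}^{N} 1_{n>N/2} e(ξ₁⌊n^{c₁}⌋+⋯+ξ_m⌊n^{c_m}⌋) |, then either N ≤ C δ^{−C}, or there exist integers k₁,…,k_m with |k_i| ≤ C δ^{−C} for all i such that δ^{C}/C ≤ | (1/N) ∑_{n=1}^{N} 1_{n>N/2} e((ξ₁+k₁) n^{c₁}+⋯+(ξ_m+k_m) n^{c_m}) |. -/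

import Mathlib

/-!
Write `e(ξ ⌊x⌋) = e(ξ x) φ(x)` with `φ(x) = e(-ξ {x})`, a `1`-periodic function that is Lipschitz
except for a jump at the integers. Replace each `φ` by its Fejér interpolant at `K` equally spaced
nodes (`fejerInterp`), a trigonometric polynomial of degree less than `K` bounded by `1`. Expanding
the product of the interpolants turns the floor sum into a combination of the sums with frequencies
`ξ_i + k_i`, `|k_i| < K`, and by pigeonhole (`exists_large_shift`) one of these is large. Here `K` is
a power of `1/δ`.

The replacement costs little provided few of the points `n^{c_i}` are near an integer
(`norm_sub_fejerInterp_le`, `sum_fejer_error`). Each exponent is treated separately, and the count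
of bad points (`card_nearInt_le`) reduces to cancellation in `∑ e(k n^c)` for `1 ≤ k < R`
(`weyl_pow`). That follows from van der Corput differencing applied `⌊c⌋` times followed by a
Kusmin–Landau bound (`weyl_general`); this is where `c ∉ ℤ` and the alternative `N ≤ C δ^{-C}`
enter.
-/

open MeasureTheory Filter Finset
open scoped ENNReal NNReal

noncomputable section

/-- `e(x) = e^{2πix}`. -/
def eC (x : ℝ) : ℂ := Complex.exp (2 * Real.pi * Complex.I * x)

/-- The symbol of the upper-half discrete averaging operator:
`m_{N;ℤ}(ξ) = (1/N) ∑_{n=1}^{N} 1_{n>N/2} e(ξ₁⌊n^{c₁}⌋ + ⋯ + ξ_m⌊n^{c_m}⌋)`. -/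
def mZ (m : ℕ) (c : Fin m → ℝ) (N : ℕ) (ξ : Fin m → ℝ) : ℂ :=
  (N : ℂ)⁻¹ * ∑ n ∈ Finset.Icc 1 N,
    if N < 2 * n then eC (∑ i, ξ i * (⌊(n : ℝ) ^ c i⌋ : ℝ)) else 0

/-! ### The character `e` and almost orthogonality -/

lemma eC_eq (x : ℝ) : eC x = Complex.exp (Complex.I * ((2 * Real.pi * x : ℝ) : ℂ)) := by
  unfold eC; congr 1; push_cast; ring

lemma eC_add (x y : ℝ) : eC (x + y) = eC x * eC y := by
  unfold eC; rw [← Complex.exp_add]; congr 1; push_cast; ring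

lemma eC_zero : eC 0 = 1 := by simp [eC]

lemma norm_eC (x : ℝ) : ‖eC x‖ = 1 := by
  rw [eC_eq, mul_comm]; exact Complex.norm_exp_ofReal_mul_I _

lemma eC_int (k : ℤ) : eC k = 1 := by
  unfold eC; rw [Complex.exp_eq_one_iff]; exact ⟨k, by push_cast; ring⟩

lemma conj_eC (x : ℝ) : (starRingEnd ℂ) (eC x) = eC (-x) := by
  rw [eC_eq, eC_eq, ← Complex.exp_conj]; congr 1
  simp only [map_mul, Complex.conj_I, Complex.conj_ofReal]
  push_cast; ring

lemma eC_sum {ι : Type*} (s : Finset ι) (g : ι → ℝ) : eC (∑ i ∈ s, g i) = ∏ i ∈ s, eC (g i) := by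
  classical
  induction s using Finset.induction_on with
  | empty => simp [eC_zero]
  | insert a s ha ih => rw [Finset.sum_insert ha, Finset.prod_insert ha, eC_add, ih]

lemma eC_re (x : ℝ) : (eC x).re = Real.cos (2 * Real.pi * x) := by
  rw [eC_eq, mul_comm, Complex.exp_ofReal_mul_I_re]

lemma norm_eC_sub_le (x y : ℝ) : ‖eC x - eC y‖ ≤ 2 * Real.pi * |x - y| := by
  have h : eC x - eC y = eC y * (eC (x - y) - 1) := by
    rw [mul_sub, ← eC_add]; simp
  rw [h, norm_mul, norm_eC, one_mul, eC_eq]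
  refine (Real.norm_exp_I_mul_ofReal_sub_one_le).trans ?_
  rw [Real.norm_eq_abs, abs_mul, abs_of_pos Real.two_pi_pos]

/-- `|e(x) - 1| = 2 |sin πx|` is at least four times the distance from `x` to the nearest integer. -/
lemma le_norm_eC_sub_one {x y : ℝ} (hy : 0 ≤ y) (h1 : y ≤ |x|) (h2 : |x| ≤ 1 - y) :
    4 * y ≤ ‖eC x - 1‖ := by
  have hpi := Real.pi_pos
  rw [eC_eq, Complex.norm_exp_I_mul_ofReal_sub_one, Real.norm_eq_abs, abs_mul, abs_two]
  have e1 : 2 * Real.pi * x / 2 = Real.pi * x := by ring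
  rw [e1]
  have e2 : |Real.sin (Real.pi * x)| = |Real.sin (Real.pi * |x|)| := by
    rcases abs_cases x with ⟨h, _⟩ | ⟨h, _⟩ <;> rw [h]
    rw [mul_neg, Real.sin_neg, abs_neg]
  rw [e2]
  have key : 2 * y ≤ Real.sin (Real.pi * |x|) := by
    rcases le_total |x| (1/2) with h | h
    · have := Real.mul_le_sin (x := Real.pi * |x|) (by positivity) (by nlinarith)
      have e : 2 / Real.pi * (Real.pi * |x|) = 2 * |x| := by field_simp
      linarith
    · have := Real.mul_le_sin (x := Real.pi - Real.pi * |x|) (by nlinarith) (by nlinarith)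
      rw [Real.sin_pi_sub] at this
      have e : 2 / Real.pi * (Real.pi - Real.pi * |x|) = 2 * (1 - |x|) := by field_simp
      linarith
  have := le_abs_self (Real.sin (Real.pi * |x|))
  linarith

lemma normSq_sum_eC {ι : Type*} (s : Finset ι) (g : ι → ℝ) :
    ((‖∑ h ∈ s, eC (g h)‖ ^ 2 : ℝ) : ℂ) = ∑ h ∈ s, ∑ l ∈ s, eC (g h - g l) := by
  push_cast
  rw [← Complex.mul_conj', map_sum, Finset.sum_mul_sum]
  simp_rw [conj_eC, ← eC_add, sub_eq_add_neg]

/-- Expanding the square: if the cross correlations of the `H` unimodular sequences `e(x h ·)` on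
`T` are at most `E`, then `∑ₙ |∑ₕ e(x h n)|²` is its diagonal part `H |T|` up to `H² E`. This
serves three times: for van der Corput's inequality, for counting points near integers, and (with
`E = 0`) for the normalization of the Fejér weights. -/
lemma almost_orthogonal (T : Finset ℕ) (H : ℕ) (x : ℕ → ℕ → ℝ) (E : ℝ)
    (hE : ∀ l h, l < h → h < H → ‖∑ n ∈ T, eC (x h n - x l n)‖ ≤ E) (hE0 : 0 ≤ E) :
    |∑ n ∈ T, ‖∑ h ∈ range H, eC (x h n)‖ ^ 2 - H * (T.card : ℝ)| ≤ (H : ℝ) ^ 2 * E := by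
  have hid : ((∑ n ∈ T, ‖∑ h ∈ range H, eC (x h n)‖ ^ 2 - H * (T.card : ℝ) : ℝ) : ℂ)
      = ∑ h ∈ range H, ∑ l ∈ range H,
        (∑ n ∈ T, eC (x h n - x l n) - if h = l then (T.card : ℂ) else 0) := by
    rw [Complex.ofReal_sub, Complex.ofReal_sum]
    simp_rw [normSq_sum_eC, Finset.sum_sub_distrib]
    congr 1
    · rw [Finset.sum_comm]
      refine Finset.sum_congr rfl fun h _ => ?_
      rw [Finset.sum_comm]
    · rw [Finset.sum_congr rfl (fun h hh => by rw [Finset.sum_ite_eq, if_pos hh])]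
      simp
  rw [← Real.norm_eq_abs, ← Complex.norm_real, hid]
  refine (norm_sum_le _ _).trans ?_
  have : ∀ h ∈ range H, ‖∑ l ∈ range H,
        (∑ n ∈ T, eC (x h n - x l n) - if h = l then (T.card : ℂ) else 0)‖ ≤ H * E := by
    intro h hh
    refine (norm_sum_le _ _).trans ?_
    have : ∀ l ∈ range H, ‖∑ n ∈ T, eC (x h n - x l n) - if h = l then (T.card : ℂ) else 0‖
        ≤ E := by
      intro l hl
      rcases lt_trichotomy h l with hlt | heq | hgt
      · rw [if_neg hlt.ne, sub_zero, ← Complex.norm_conj, map_sum]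
        simp_rw [conj_eC, neg_sub]
        exact hE h l hlt (mem_range.1 hl)
      · subst heq; simpa [eC_zero] using hE0
      · rw [if_neg hgt.ne', sub_zero]
        exact hE l h hgt (mem_range.1 hh)
    refine (Finset.sum_le_sum this).trans ?_
    simp
  refine (Finset.sum_le_sum this).trans ?_
  simp; ring_nf; rfl

/-! ### Van der Corput's method for sequences -/

/-- The `j`-th iterated forward difference (step `1`) of a real sequence. -/
def dif : ℕ → (ℕ → ℝ) → ℕ → ℝ
  | 0, f => f
  | j + 1, f => dif j (fun n => f (n + 1) - f n)

lemma dif_sub_shift (j : ℕ) (f : ℕ → ℝ) (a b n : ℕ) :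
    dif j (fun n => f (n + a) - f (n + b)) n = dif j f (n + a) - dif j f (n + b) := by
  induction j generalizing f with
  | zero => rfl
  | succ j ih =>
    have := ih (fun n => f (n + 1) - f n)
    simp only [dif]
    rw [← this]
    congr 1
    funext k
    rw [Nat.add_right_comm k 1 a, Nat.add_right_comm k 1 b]
    ring

lemma dif_succ (j : ℕ) (f : ℕ → ℝ) (n : ℕ) : dif (j + 1) f n = dif j f (n + 1) - dif j f n :=
  dif_sub_shift j f 1 0 n

lemma dif_shift_eq_sum (j : ℕ) (f : ℕ → ℝ) (l d n : ℕ) :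
    dif j (fun n => f (n + (l + d)) - f (n + l)) n
      = ∑ i ∈ range d, dif (j + 1) f (n + l + i) := by
  rw [dif_sub_shift, ← add_assoc]
  have := Finset.sum_range_sub (fun i => dif j f (n + l + i)) d
  simp only [add_zero] at this
  rw [← this]
  refine Finset.sum_congr rfl fun i _ => ?_
  rw [dif_succ, add_assoc (n + l) i 1]

lemma sum_by_parts_eC (f : ℕ → ℝ) (u : ℕ → ℂ) (L : ℕ)
    (hu : ∀ n, n < L + 1 → eC (f n) = u n * (eC (f (n + 1)) - eC (f n))) :
    ∑ n ∈ range (L + 1), eC (f n)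
      = u L * eC (f (L + 1)) - u 0 * eC (f 0)
        - ∑ n ∈ range L, (u (n + 1) - u n) * eC (f (n + 1)) := by
  induction L with
  | zero => simp only [zero_add, range_one, sum_singleton, range_zero, sum_empty, sub_zero]
            rw [← mul_sub, ← zero_add 1, ← hu 0 (by omega)]
  | succ L ih =>
    rw [Finset.sum_range_succ, ih (fun n hn => hu n (by omega)), Finset.sum_range_succ]
    linear_combination hu (L + 1) (by omega)

/-- A Kusmin–Landau bound, in the crude form where monotonicity of the first difference `d` is
replaced by a bound on the second: sum by parts with `u = 1 / (e(d) - 1)`, where `|u| ≤ 1 / (4λ)`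
and the total variation of `u` is `O(B / λ)`. -/
lemma kusmin_landau {B lam N : ℝ} {L : ℕ} (hB : 1 ≤ B) (hlam : 0 < lam) (hN : (L : ℝ) ≤ N)
    (hBl : B * lam ≤ 1 / 2) (f : ℕ → ℝ)
    (h1 : ∀ n < L, lam ≤ dif 1 f n ∧ dif 1 f n ≤ B * lam)
    (h2 : ∀ n < L, |dif 2 f n| ≤ B * lam / N) :
    ‖∑ n ∈ range L, eC (f n)‖ ≤ B / lam := by
  rcases L with _ | L
  · simp; positivity
  have hNpos : 0 < N := lt_of_lt_of_le (by positivity) hN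
  set d : ℕ → ℝ := dif 1 f with hd
  have hd' : ∀ n, f (n + 1) = f n + d n := fun n => by simp [hd, dif]
  have hlow : ∀ n < L + 1, 4 * lam ≤ ‖eC (d n) - 1‖ := by
    intro n hn
    obtain ⟨ha, hb⟩ := h1 n hn
    have hab : |d n| = d n := abs_of_pos (hlam.trans_le ha)
    exact le_norm_eC_sub_one hlam.le (by rw [hab]; exact ha)
      (by rw [hab]; nlinarith)
  have hne : ∀ n < L + 1, eC (d n) - 1 ≠ 0 := fun n hn h0 => by
    have := hlow n hn; rw [h0, norm_zero] at this; linarith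
  have hun : ∀ n < L + 1, ‖(eC (d n) - 1)⁻¹‖ ≤ 1 / (4 * lam) := by
    intro n hn
    rw [norm_inv, ← one_div]
    exact one_div_le_one_div_of_le (by positivity) (hlow n hn)
  rw [sum_by_parts_eC f (fun n => (eC (d n) - 1)⁻¹) L]
  · have hvar : ∀ n ∈ range L, ‖((eC (d (n + 1)) - 1)⁻¹ - (eC (d n) - 1)⁻¹) * eC (f (n + 1))‖
        ≤ B / (2 * lam * N) := by
      intro n hn
      have hn := mem_range.1 hn
      rw [norm_mul, norm_eC, mul_one, inv_sub_inv (hne _ (by omega)) (hne _ (by omega)),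
        div_eq_mul_inv, mul_inv, norm_mul, norm_mul]
      have e : eC (d n) - 1 - (eC (d (n + 1)) - 1) = eC (d n) - eC (d (n + 1)) := by ring
      rw [e]
      have h3 : ‖eC (d n) - eC (d (n + 1))‖ ≤ 2 * Real.pi * (B * lam / N) := by
        refine (norm_eC_sub_le _ _).trans ?_
        have := h2 n (by omega)
        rw [dif_succ, abs_sub_comm] at this
        exact mul_le_mul_of_nonneg_left this Real.two_pi_pos.le
      calc _ ≤ (2 * Real.pi * (B * lam / N)) * (1 / (4 * lam) * (1 / (4 * lam))) := by
            gcongr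
            · exact hun _ (by omega)
            · exact hun _ (by omega)
        _ = (Real.pi / 4) * (B / (2 * lam * N)) := by field_simp; ring
        _ ≤ 1 * (B / (2 * lam * N)) := by
            gcongr; linarith [Real.pi_le_four]
        _ = _ := one_mul _
    have hs := (norm_sum_le _ _).trans (Finset.sum_le_sum hvar)
    rw [Finset.sum_const, card_range, nsmul_eq_mul] at hs
    have hs2 : (L : ℝ) * (B / (2 * lam * N)) ≤ B / (2 * lam) := by
      have : (L : ℝ) ≤ N := by push_cast at hN; linarith
      calc (L : ℝ) * (B / (2 * lam * N)) ≤ N * (B / (2 * lam * N)) := by gcongr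
        _ = _ := by field_simp
    have ha := hun L (by omega)
    have hb := hun 0 (by omega)
    refine (norm_sub_le _ _).trans ?_
    have h5 := norm_sub_le ((eC (d L) - 1)⁻¹ * eC (f (L + 1))) ((eC (d 0) - 1)⁻¹ * eC (f 0))
    rw [norm_mul, norm_mul, norm_eC, norm_eC, mul_one, mul_one] at h5
    have h6 : 1 / (4 * lam) + 1 / (4 * lam) + B / (2 * lam) ≤ B / lam := by
      have e : 1 / (4 * lam) + 1 / (4 * lam) + B / (2 * lam) = ((1 + B) / 2) / lam := by
        field_simp; ring
      rw [e]
      gcongr; linarith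
    linarith
  · intro n hn
    rw [hd', eC_add]
    have e : eC (f n) * eC (d n) - eC (f n) = eC (f n) * (eC (d n) - 1) := by ring
    rw [e, mul_comm, mul_assoc, mul_inv_cancel₀ (hne n hn), mul_one]

/-- Van der Corput's inequality. Averaging the sum over shifts by `h < H` costs at most `H`;
Cauchy–Schwarz then brings in the correlations of the shifted sequences. The sums run over
`range (L - H)` so that no shifted index leaves `range L`. -/
lemma van_der_corput (f : ℕ → ℝ) (L H : ℕ) (E : ℝ) (hE0 : 0 ≤ E) (hH : 0 < H)
    (hE : ∀ l d, 0 < d → l + d < H →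
      ‖∑ n ∈ range (L - H), eC (f (n + (l + d)) - f (n + l))‖ ≤ E) :
    ‖∑ n ∈ range L, eC (f n)‖ ≤ H + √(L * (L / H + E)) := by
  rcases lt_or_ge L H with hLH | hLH
  · have : ‖∑ n ∈ range L, eC (f n)‖ ≤ L := by
      refine (norm_sum_le _ _).trans ?_
      simp [norm_eC]
    have h2 : (L : ℝ) ≤ H := by exact_mod_cast hLH.le
    have := Real.sqrt_nonneg (L * (L / H + E))
    linarith
  obtain ⟨M, rfl⟩ := Nat.exists_eq_add_of_le' hLH
  rw [Nat.add_sub_cancel] at hE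
  have hHr : (0 : ℝ) < H := by exact_mod_cast hH
  set S := ∑ n ∈ range (M + H), eC (f n) with hS
  have hshift : ∀ h ∈ range H, ‖S - ∑ n ∈ range M, eC (f (n + h))‖ ≤ H := by
    intro h hh
    obtain ⟨r, hr⟩ := Nat.exists_eq_add_of_lt (mem_range.1 hh)
    have e : S = ∑ n ∈ range h, eC (f n) + ∑ n ∈ range M, eC (f (n + h))
        + ∑ n ∈ range (r + 1), eC (f (h + M + n)) := by
      rw [hS, hr, show M + (h + r + 1) = h + M + (r + 1) by ring, Finset.sum_range_add,
        Finset.sum_range_add]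
      simp_rw [add_comm h]
    rw [e, show ∀ a b c : ℂ, a + b + c - b = a + c from fun a b c => by ring]
    have h1 : ‖∑ n ∈ range h, eC (f n)‖ ≤ h := (norm_sum_le _ _).trans (by simp [norm_eC])
    have h2 : ‖∑ n ∈ range (r + 1), eC (f (h + M + n))‖ ≤ (r + 1 : ℕ) :=
      (norm_sum_le _ _).trans (by simp [norm_eC])
    refine (norm_add_le _ _).trans ((add_le_add h1 h2).trans ?_)
    rw [hr]; push_cast; linarith
  have hort := almost_orthogonal (range M) H (fun h n => f (n + h)) E (by
    intro l h hlh hhH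
    obtain ⟨d, rfl⟩ := Nat.exists_eq_add_of_lt hlh
    exact hE l (d + 1) (by omega) (by omega)) hE0
  have hort := (abs_le.1 hort).2
  rw [card_range] at hort
  set Q := ∑ n ∈ range M, ‖∑ h ∈ range H, eC (f (n + h))‖ with hQ
  have hcs : Q ^ 2 ≤ M * (H * M + H ^ 2 * E) := by
    have := sq_sum_le_card_mul_sum_sq (s := range M)
      (f := fun n => ‖∑ h ∈ range H, eC (f (n + h))‖)
    rw [card_range] at this
    refine this.trans ?_
    gcongr; linarith
  have hM : (M : ℝ) ≤ (M + H : ℕ) := by push_cast; linarith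
  have hQ2 : Q ≤ H * √((M + H : ℕ) * ((M + H : ℕ) / H + E)) := by
    have : (H : ℝ) * √((M + H : ℕ) * ((M + H : ℕ) / H + E))
        = √(H ^ 2 * ((M + H : ℕ) * ((M + H : ℕ) / H + E))) := by
      rw [Real.sqrt_mul (x := (H : ℝ) ^ 2) (by positivity), Real.sqrt_sq hHr.le]
    rw [this]
    refine Real.le_sqrt_of_sq_le (hcs.trans ?_)
    calc (M : ℝ) * (H * M + H ^ 2 * E) ≤ (M + H : ℕ) * (H * (M + H : ℕ) + H ^ 2 * E) := by
          gcongr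
      _ = _ := by field_simp
  have hmain : (H : ℝ) * ‖S‖ ≤ H * H + Q := by
    have e : (H : ℂ) * S = ∑ h ∈ range H, (S - ∑ n ∈ range M, eC (f (n + h)))
        + ∑ n ∈ range M, ∑ h ∈ range H, eC (f (n + h)) := by
      rw [Finset.sum_sub_distrib, Finset.sum_comm (s := range M), sub_add_cancel]; simp
    have : (H : ℝ) * ‖S‖ = ‖(H : ℂ) * S‖ := by simp
    rw [this, e]
    refine (norm_add_le _ _).trans (add_le_add ?_ (norm_sum_le _ _))
    refine (norm_sum_le _ _).trans ((Finset.sum_le_sum hshift).trans ?_)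
    simp
  have : (H : ℝ) * ‖S‖ ≤ H * (H + √((M + H : ℕ) * ((M + H : ℕ) / H + E))) := by linarith
  exact le_of_mul_le_mul_left this hHr

/-- Cancellation in `∑ e(f n)` when the `(j+1)`-st difference of `f` has size `λ`, varies slowly,
and `1/N` is much smaller than `λ`, which is much smaller than `1` (polynomially in `ε`). The case
`j = 0` is the Kusmin–Landau bound; van der Corput differencing with `H ≈ 8 / ε²` replaces `f` by
`f(· + l + d) - f(· + l)` with `d < H`, which lowers `j` by one and turns `λ` into `d λ`. -/
lemma weyl_general (B : ℝ) (hB : 1 ≤ B) (j : ℕ) :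
    ∃ A : ℕ, 1 ≤ A ∧ ∀ (ε : ℝ), 0 < ε → ε ≤ 1 → ∀ (N L : ℕ), L ≤ N → ∀ lam : ℝ, 0 < lam →
      (A : ℝ) ≤ ε ^ A * (N * lam) → A * lam ≤ ε ^ A → ∀ f : ℕ → ℝ,
      (∀ n < L, lam ≤ dif (j + 1) f n ∧ dif (j + 1) f n ≤ B * lam) →
      (∀ n < L, |dif (j + 2) f n| ≤ B * lam / N) →
      ‖∑ n ∈ range L, eC (f n)‖ ≤ ε * N := by
  induction j with
  | zero =>
    obtain ⟨A, hA⟩ := exists_nat_ge (2 * B)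
    have hA1 : (1 : ℝ) ≤ A := by linarith
    have hA1' : 1 ≤ A := by exact_mod_cast hA1
    refine ⟨A, hA1', ?_⟩
    intro ε hε hε1 N L hLN lam hlam hl1 hl2 f h1 h2
    have hp1 : ε ^ A ≤ 1 := pow_le_one₀ hε.le hε1
    have hpe : ε ^ A ≤ ε := pow_le_of_le_one hε.le hε1 (by omega)
    refine (kusmin_landau hB hlam (N := N) (by exact_mod_cast hLN) (by nlinarith) f h1 h2).trans ?_
    rw [div_le_iff₀ hlam]
    have : ε ^ A * (N * lam) ≤ ε * (N * lam) := by gcongr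
    nlinarith
  | succ j ih =>
    obtain ⟨A₀, hA₀, ih⟩ := ih
    refine ⟨9 * A₀ * 8 ^ A₀ + 2 * A₀ + 20, by omega, ?_⟩
    set A := 9 * A₀ * 8 ^ A₀ + 2 * A₀ + 20 with hAdef
    intro ε hε hε1 N L hLN lam hlam hl1 hl2 f h1 h2
    have hAr : (A : ℝ) = 9 * A₀ * 8 ^ A₀ + 2 * A₀ + 20 := by rw [hAdef]; push_cast; ring
    have hA₀r : (1 : ℝ) ≤ A₀ := by exact_mod_cast hA₀
    have h8 : (1 : ℝ) ≤ 8 ^ A₀ := one_le_pow₀ (by norm_num)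
    have hpa : ε ^ A ≤ ε ^ (2 * A₀) := pow_le_pow_of_le_one hε.le hε1 (by omega)
    have hpb : ε ^ A ≤ ε ^ (2 * A₀ + 2) := pow_le_pow_of_le_one hε.le hε1 (by omega)
    have hpc : ε ^ A ≤ ε ^ 3 := pow_le_pow_of_le_one hε.le hε1 (by omega)
    have hp1 : ε ^ A ≤ 1 := pow_le_one₀ hε.le hε1
    have hpe' : (ε ^ 2 / 8) ^ A₀ = ε ^ (2 * A₀) / 8 ^ A₀ := by rw [div_pow, pow_mul]
    have hlam1 : lam ≤ 1 := by nlinarith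
    -- the differencing length
    set H := ⌈8 / ε ^ 2⌉₊ with hH
    have hHlow : 8 / ε ^ 2 ≤ H := Nat.le_ceil _
    have hHpos : 0 < H := Nat.ceil_pos.2 (by positivity)
    have hHr : (0 : ℝ) < H := by exact_mod_cast hHpos
    have hHup : (H : ℝ) * ε ^ 2 ≤ 9 := by
      have := (Nat.ceil_lt_add_one (a := 8 / ε ^ 2) (by positivity)).le
      have h' : ε ^ 2 ≤ 1 := pow_le_one₀ hε.le hε1
      calc (H : ℝ) * ε ^ 2 ≤ (8 / ε ^ 2 + 1) * ε ^ 2 := by gcongr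
        _ = 8 + ε ^ 2 := by field_simp
        _ ≤ 9 := by linarith
    have hHlow' : 8 ≤ H * ε ^ 2 := by rwa [div_le_iff₀ (by positivity)] at hHlow
    have hL : (L : ℝ) ≤ N := by exact_mod_cast hLN
    have hvdc := van_der_corput f L H (ε ^ 2 / 8 * N) (by positivity) hHpos (by
      intro l d hd hld
      have hdr : (1 : ℝ) ≤ d := by exact_mod_cast hd
      have hdH : (d : ℝ) ≤ H := by exact_mod_cast (by omega : d ≤ H)
      have hsum1 : ∀ (x : ℕ → ℝ) (a : ℝ), (∀ i ∈ range d, a ≤ x i) → d * a ≤ ∑ i ∈ range d, x i :=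
        fun x a h => by simpa using Finset.card_nsmul_le_sum (range d) x a h
      have hsum2 : ∀ (x : ℕ → ℝ) (a : ℝ), (∀ i ∈ range d, x i ≤ a) → ∑ i ∈ range d, x i ≤ d * a :=
        fun x a h => by simpa using Finset.sum_le_card_nsmul (range d) x a h
      have hb : B * (d * lam) = d * (B * lam) := by ring
      refine ih (ε ^ 2 / 8) (by positivity) (by nlinarith) N (L - H) (by omega) (d * lam)
        (by positivity) ?_ ?_ _ ?_ ?_
      · rw [hpe', div_mul_eq_mul_div, le_div_iff₀ (by positivity)]
        have h3 : ε ^ A * (N * lam) ≤ ε ^ (2 * A₀) * (N * (d * lam)) := by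
          gcongr; nlinarith
        nlinarith
      · rw [hpe', le_div_iff₀ (by positivity)]
        have h4 : (9 * A₀ * 8 ^ A₀) * lam ≤ ε ^ (2 * A₀) * ε ^ 2 := by
          rw [← pow_add]
          refine le_trans ?_ (hl2.trans hpb)
          gcongr; linarith
        have h5 : (A₀ * 8 ^ A₀ * lam) * (H * ε ^ 2) ≤ (A₀ * 8 ^ A₀ * lam) * 9 := by gcongr
        have h6 : (A₀ * 8 ^ A₀ * lam * H) * ε ^ 2 ≤ ε ^ (2 * A₀) * ε ^ 2 := by nlinarith
        have h7 := le_of_mul_le_mul_right h6 (by positivity)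
        calc (A₀ : ℝ) * (d * lam) * 8 ^ A₀ ≤ A₀ * (H * lam) * 8 ^ A₀ := by gcongr
          _ = A₀ * 8 ^ A₀ * lam * H := by ring
          _ ≤ _ := h7
      · intro n hn
        rw [dif_shift_eq_sum, hb]
        refine ⟨hsum1 _ _ fun i hi => ?_, hsum2 _ _ fun i hi => ?_⟩
        · exact (h1 _ (by have := mem_range.1 hi; omega)).1
        · exact (h1 _ (by have := mem_range.1 hi; omega)).2
      · intro n hn
        rw [dif_shift_eq_sum, hb, mul_div_assoc]
        refine (Finset.abs_sum_le_sum_abs _ _).trans (hsum2 _ _ fun i hi => ?_)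
        exact h2 _ (by have := mem_range.1 hi; omega))
    refine hvdc.trans ?_
    have hN3 : 20 ≤ ε ^ 3 * N := by
      calc (20 : ℝ) ≤ A := by rw [hAr]; nlinarith
        _ ≤ ε ^ A * (N * lam) := hl1
        _ ≤ ε ^ 3 * (N * 1) := by gcongr
        _ = _ := by ring
    have hHN : (H : ℝ) ≤ ε * N / 2 := by
      have : (H : ℝ) * ε ^ 2 ≤ (ε * N / 2) * ε ^ 2 := by nlinarith
      exact le_of_mul_le_mul_right this (by positivity)
    have hsq : √(L * (L / H + ε ^ 2 / 8 * N)) ≤ ε * N / 2 := by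
      rw [Real.sqrt_le_left (by positivity)]
      have : (L : ℝ) / H ≤ ε ^ 2 / 8 * N := by
        rw [div_le_iff₀ hHr]
        have hN0 : (0 : ℝ) ≤ N := by positivity
        nlinarith
      calc (L : ℝ) * (L / H + ε ^ 2 / 8 * N) ≤ N * (ε ^ 2 / 8 * N + ε ^ 2 / 8 * N) := by gcongr
        _ = _ := by ring
    linarith

/-! ### Exponential sums along `k n^c` -/

/-- Iterated mean value theorem: the `j`-th difference is a value of the `j`-th derivative. -/
lemma dif_eq_deriv (F : ℕ → ℝ → ℝ) (hF : ∀ i x, 0 < x → HasDerivAt (F i) (F (i + 1) x) x)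
    (a : ℝ) (ha : 0 < a) (j n : ℕ) :
    ∃ y, a + n ≤ y ∧ y ≤ a + n + j ∧ dif j (fun n : ℕ => F 0 (a + n)) n = F j y := by
  induction j generalizing F with
  | zero => exact ⟨a + n, le_rfl, by simp, rfl⟩
  | succ j ih =>
    obtain ⟨y, hy1, hy2, hy⟩ := ih (fun i x => F i (x + 1) - F i x) (fun i x hx => by
      have h1 := (hF i (x + 1) (by linarith)).comp_add_const x 1
      exact h1.sub (hF i x hx))
    have hn : (0 : ℝ) ≤ n := by positivity
    have hder : ∀ x ∈ Set.Icc y (y + 1), HasDerivAt (F j) (F (j + 1) x) x :=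
      fun x hx => hF j x (by linarith [hx.1])
    obtain ⟨z, hz, hz'⟩ := exists_hasDerivAt_eq_slope (F j) (F (j + 1)) (by linarith : y < y + 1)
      (fun x hx => (hder x hx).continuousAt.continuousWithinAt)
      (fun x hx => hder x (Set.Ioo_subset_Icc_self hx))
    refine ⟨z, by linarith [hz.1], by push_cast; linarith [hz.2], ?_⟩
    rw [hz', add_sub_cancel_left, div_one, ← hy]
    simp only [dif]
    congr 1
    funext k
    push_cast
    rw [add_assoc]

/-- Largeness of `N` in terms of `ε` passes to any fixed positive power of `N`. -/
lemma exists_growth (σ X : ℝ) (hσ : 0 < σ) (a : ℕ) : ∃ A : ℕ, 1 ≤ A ∧ ∀ ε : ℝ, 0 < ε → ε ≤ 1 →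
    ∀ N : ℝ, 0 ≤ N → (A : ℝ) ≤ ε ^ A * N → X ≤ ε ^ a * N ^ σ := by
  obtain ⟨A, hA⟩ := exists_nat_ge (max 1 (max (a / σ) ((max X 0) ^ (1 / σ))))
  have hA1 : (1 : ℝ) ≤ A := (le_max_left _ _).trans hA
  have hA2 : a / σ ≤ A := (le_max_left _ _).trans ((le_max_right _ _).trans hA)
  have hA3 : (max X 0) ^ (1 / σ) ≤ A := (le_max_right _ _).trans ((le_max_right _ _).trans hA)
  refine ⟨A, by exact_mod_cast hA1, fun ε hε hε1 N hN h => ?_⟩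
  have h1 : ((max X 0) ^ (1 / σ)) ^ σ ≤ (ε ^ A * N) ^ σ :=
    Real.rpow_le_rpow (by positivity) (hA3.trans h) hσ.le
  rw [← Real.rpow_mul (le_max_right _ _), one_div_mul_cancel hσ.ne', Real.rpow_one,
    Real.mul_rpow (by positivity) hN, ← Real.rpow_natCast, ← Real.rpow_mul hε.le] at h1
  rw [div_le_iff₀ hσ] at hA2
  calc X ≤ max X 0 := le_max_left _ _
    _ ≤ ε ^ ((A : ℝ) * σ) * N ^ σ := h1
    _ ≤ ε ^ (a : ℝ) * N ^ σ := by
        gcongr ?_ * _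
        exact Real.rpow_le_rpow_of_exponent_ge hε hε1 hA2
    _ = _ := by rw [Real.rpow_natCast]

lemma hasDerivAt_pow_chain (c k : ℝ) (i : ℕ) (x : ℝ) (hx : 0 < x) :
    HasDerivAt (fun x : ℝ => k * (∏ r ∈ range i, (c - r)) * x ^ (c - i))
      (k * (∏ r ∈ range (i + 1), (c - r)) * x ^ (c - (i + 1 : ℕ))) x := by
  have := (Real.hasDerivAt_rpow_const (p := c - i) (Or.inl hx.ne')).const_mul
    (k * (∏ r ∈ range i, (c - r)))
  have e : k * (∏ r ∈ range (i + 1), (c - r)) * x ^ (c - (i + 1 : ℕ))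
      = k * (∏ r ∈ range i, (c - r)) * ((c - i) * x ^ (c - i - 1)) := by
    rw [Finset.prod_range_succ]
    push_cast
    rw [sub_add_eq_sub_sub]
    ring
  rw [e]
  exact this

/-- Power-saving cancellation in `∑_{N/2 < n ≤ N} e(k n^c)`. With `J = ⌊c⌋`, the `(J+1)`-st
derivative of `k x^c` is of size `k N^(c - J - 1)`, and `-1 < c - J - 1 < 0` because `c` is not an
integer, so it lies in the range needed for `weyl_general`. -/
lemma weyl_pow (c : ℝ) (hc : 0 < c) (hint : ∀ k : ℤ, c ≠ k) :
    ∃ A : ℕ, 1 ≤ A ∧ ∀ ε : ℝ, 0 < ε → ε ≤ 1 → ∀ N k : ℕ, 1 ≤ k → k * ε ≤ 1 →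
      (A : ℝ) ≤ ε ^ A * N →
      ‖∑ n ∈ Ico (N / 2 + 1) (N + 1), eC (k * (n : ℝ) ^ c)‖ ≤ ε * N := by
  set J := ⌊c⌋₊ with hJ
  have hJle : (J : ℝ) ≤ c := Nat.floor_le hc.le
  have hJlt : c < J + 1 := Nat.lt_floor_add_one c
  have hJne : (J : ℝ) < c := lt_of_le_of_ne hJle fun h => hint J (by rw [← h]; simp)
  set θ := c - J with hθ
  have hθ0 : 0 < θ := by linarith
  have hθ1 : θ < 1 := by linarith
  set p := ∏ r ∈ range (J + 1), (c - r) with hp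
  have hp0 : 0 < p := Finset.prod_pos fun r hr => by
    have : (r : ℝ) ≤ J := by exact_mod_cast Nat.lt_succ_iff.1 (mem_range.1 hr)
    linarith
  obtain ⟨A₀, hA₀, hW⟩ := weyl_general 8 (by norm_num) J
  set σ := min θ (1 - θ) with hσ
  have hσ0 : 0 < σ := lt_min hθ0 (by linarith)
  obtain ⟨A₁, hA₁, hG⟩ := exists_growth σ (max (2 * A₀ / p) (A₀ * p)) hσ0 (A₀ + 1)
  refine ⟨A₁ + J + 2, by omega, ?_⟩
  intro ε hε hε1 N k hk hkε hN
  have hpow : ε ^ (A₁ + J + 2) ≤ ε ^ A₁ := pow_le_pow_of_le_one hε.le hε1 (by omega)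
  have hpow1 : ε ^ (A₁ + J + 2) ≤ 1 := pow_le_one₀ hε.le hε1
  have hN0 : (0 : ℝ) ≤ N := by positivity
  have hNA : ((A₁ + J + 2 : ℕ) : ℝ) ≤ N := hN.trans (by nlinarith)
  have hNJ : J + 2 ≤ N := by
    have : A₁ + J + 2 ≤ N := by exact_mod_cast hNA
    omega
  have hNpos : (0 : ℝ) < N := by exact_mod_cast (by omega : 0 < N)
  have hN1 : (1 : ℝ) ≤ N := by exact_mod_cast (by omega : 1 ≤ N)
  have hgr := hG ε hε hε1 N hN0 (by
    have : (A₁ : ℝ) ≤ ((A₁ + J + 2 : ℕ) : ℝ) := by exact_mod_cast (by omega)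
    exact this.trans (hN.trans (by gcongr)))
  have hg1 : 2 * A₀ / p ≤ ε ^ (A₀ + 1) * (N : ℝ) ^ σ := (le_max_left _ _).trans hgr
  have hg2 : A₀ * p ≤ ε ^ (A₀ + 1) * (N : ℝ) ^ σ := (le_max_right _ _).trans hgr
  have hkr : (1 : ℝ) ≤ k := by exact_mod_cast hk
  set lam : ℝ := k * p * (2 * N) ^ (θ - 1) with hlam
  have hlam0 : 0 < lam := by positivity
  rw [Finset.sum_Ico_eq_sum_range]
  set M := N / 2 + 1 with hM
  have hMr : (N : ℝ) / 2 ≤ M := by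
    have : N ≤ 2 * M := by omega
    have : (N : ℝ) ≤ 2 * M := by exact_mod_cast this
    linarith
  have hMpos : (0 : ℝ) < M := by positivity
  have hloc : ∀ y : ℝ, (N : ℝ) / 2 ≤ y → y ^ (θ - 1) ≤ 4 * (2 * N) ^ (θ - 1) := by
    intro y hy
    calc y ^ (θ - 1) ≤ ((N : ℝ) / 2) ^ (θ - 1) :=
          Real.rpow_le_rpow_of_nonpos (by positivity) hy (by linarith)
      _ = ((1 / 4 : ℝ) * (2 * N)) ^ (θ - 1) := by congr 1; ring
      _ = (1 / 4 : ℝ) ^ (θ - 1) * (2 * N) ^ (θ - 1) := by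
          rw [Real.mul_rpow (by norm_num) (by positivity)]
      _ ≤ (1 / 4 : ℝ) ^ (-1 : ℝ) * (2 * N) ^ (θ - 1) := by
          gcongr ?_ * _
          exact Real.rpow_le_rpow_of_exponent_ge (by norm_num) (by norm_num) (by linarith)
      _ = _ := by rw [Real.rpow_neg_one]; norm_num
  set F : ℕ → ℝ → ℝ := fun i x => k * (∏ r ∈ range i, (c - r)) * x ^ (c - i) with hF
  have hf : ∀ n : ℕ, (k : ℝ) * ((M + n : ℕ) : ℝ) ^ c = F 0 (M + n) := by
    intro n; simp [hF]
  simp_rw [hf]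
  have hFd : ∀ i x, 0 < x → HasDerivAt (F i) (F (i + 1) x) x :=
    fun i x hx => hasDerivAt_pow_chain c k i x hx
  refine hW ε hε hε1 N _ (by omega) lam hlam0 ?_ ?_ _ ?_ ?_
  · have h1 : (N : ℝ) * (2 * N) ^ (θ - 1) = (2 * N) ^ θ / 2 := by
      rw [Real.rpow_sub_one (by positivity)]; field_simp
    have h2 : (N : ℝ) ^ σ ≤ (2 * N) ^ θ :=
      (Real.rpow_le_rpow_of_exponent_le hN1 (min_le_left _ _)).trans
        (Real.rpow_le_rpow hN0 (by linarith) hθ0.le)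
    rw [div_le_iff₀ hp0] at hg1
    have h3 : (N : ℝ) * lam = k * p * ((2 * N) ^ θ / 2) := by rw [← h1, hlam]; ring
    rw [h3]
    have h4 : ε ^ (A₀ + 1) ≤ ε ^ A₀ := pow_le_pow_of_le_one hε.le hε1 (by omega)
    have h5 : ε ^ (A₀ + 1) * (N : ℝ) ^ σ * p ≤ ε ^ A₀ * (2 * N) ^ θ * (k * p) := by
      gcongr
      nlinarith
    linarith
  · have h2 : (2 * N : ℝ) ^ (θ - 1) ≤ (N : ℝ) ^ (-σ) :=
      (Real.rpow_le_rpow_of_nonpos hNpos (by linarith) (by linarith)).trans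
        (Real.rpow_le_rpow_of_exponent_le hN1 (by linarith [min_le_right θ (1 - θ)]))
    have h3 : (N : ℝ) ^ σ * (N : ℝ) ^ (-σ) = 1 := by
      rw [← Real.rpow_add hNpos]; simp
    calc (A₀ : ℝ) * lam = (A₀ * p) * k * (2 * N) ^ (θ - 1) := by rw [hlam]; ring
      _ ≤ (ε ^ (A₀ + 1) * (N : ℝ) ^ σ) * k * (N : ℝ) ^ (-σ) := by gcongr
      _ = ε ^ A₀ * (k * ε) * ((N : ℝ) ^ σ * (N : ℝ) ^ (-σ)) := by ring
      _ ≤ ε ^ A₀ * 1 * 1 := by rw [h3]; gcongr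
      _ = ε ^ A₀ := by ring
  · intro n hn
    obtain ⟨y, hy1, hy2, hy⟩ := dif_eq_deriv F hFd M hMpos (J + 1) n
    rw [hy]
    have hnr : (0 : ℝ) ≤ n := by positivity
    have hyN : (N : ℝ) / 2 ≤ y := by linarith
    have hyu : y ≤ 2 * N := by
      have : M + n + (J + 1) ≤ 2 * N := by omega
      have : (M : ℝ) + n + (J + 1 : ℕ) ≤ 2 * N := by exact_mod_cast this
      linarith
    have e : F (J + 1) y = k * p * y ^ (θ - 1) := by
      simp only [hF, hp, hθ]; push_cast; rw [sub_add_eq_sub_sub]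
    rw [e, hlam]
    constructor
    · gcongr ?_ * ?_
      exact Real.rpow_le_rpow_of_nonpos (by linarith) hyu (by linarith)
    · calc k * p * y ^ (θ - 1) ≤ k * p * (4 * (2 * N) ^ (θ - 1)) := by
            gcongr; exact hloc y hyN
        _ ≤ _ := by
            have : 0 ≤ k * p * (2 * N : ℝ) ^ (θ - 1) := by positivity
            nlinarith
  · intro n hn
    obtain ⟨y, hy1, hy2, hy⟩ := dif_eq_deriv F hFd M hMpos (J + 2) n
    rw [hy]
    have hnr : (0 : ℝ) ≤ n := by positivity
    have hyN : (N : ℝ) / 2 ≤ y := by linarith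
    have hy0 : 0 < y := by linarith
    have e : F (J + 2) y = k * p * (θ - 1) * (y ^ (θ - 1) / y) := by
      simp only [hF]
      rw [Finset.prod_range_succ, ← Real.rpow_sub_one hy0.ne', hp, hθ]; push_cast
      rw [show c - ((J : ℝ) + 2) = c - J - 1 - 1 by ring]; ring
    rw [e, abs_mul, abs_mul, abs_of_nonneg (by positivity : 0 ≤ k * p),
      abs_of_nonneg (by positivity : 0 ≤ y ^ (θ - 1) / y)]
    have ht : |θ - 1| ≤ 1 := abs_le.2 ⟨by linarith, by linarith⟩
    calc k * p * |θ - 1| * (y ^ (θ - 1) / y)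
        ≤ k * p * 1 * (4 * (2 * N) ^ (θ - 1) / ((N : ℝ) / 2)) := by
          gcongr; exact hloc y hyN
      _ = _ := by rw [hlam]; field_simp; ring

/-! ### Points near integers and Fejér interpolation -/

lemma eC_nat_mul (n : ℕ) (x : ℝ) : eC (n * x) = eC x ^ n := by
  unfold eC; rw [← Complex.exp_nat_mul]; congr 1; push_cast; ring

lemma eC_nat_mul_sub_int (n : ℕ) (x : ℝ) (z : ℤ) : eC (n * (x - z)) = eC (n * x) := by
  have : (n : ℝ) * x = n * (x - z) + ((n * z : ℤ) : ℝ) := by push_cast; ring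
  rw [this, eC_add, eC_int, mul_one]

/-- `t` lies within `1/(8R)` of an integer, up to the convention at the endpoints. -/
def NearInt (R : ℕ) (t : ℝ) : Prop :=
  Int.fract t < 1 / (8 * R) ∨ 1 - 1 / (8 * R) < Int.fract t

lemma norm_dirichlet_lower {R : ℕ} (hR : 1 ≤ R) {t : ℝ} (ht : NearInt R t) :
    (R : ℝ) / 2 ≤ ‖∑ j ∈ range R, eC (j * t)‖ := by
  have hRr : (1 : ℝ) ≤ R := by exact_mod_cast hR
  obtain ⟨z, hz⟩ : ∃ z : ℤ, |t - z| ≤ 1 / (8 * R) := by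
    have h0 := Int.fract_nonneg t
    have h1 := Int.fract_lt_one t
    have h2 := Int.self_sub_floor t
    have h3 : (0 : ℝ) < 1 / (8 * R) := by positivity
    rcases ht with h | h
    · exact ⟨⌊t⌋, by rw [h2, abs_of_nonneg h0]; exact h.le⟩
    · refine ⟨⌊t⌋ + 1, ?_⟩
      push_cast
      rw [← sub_sub, h2, abs_le]
      constructor <;> linarith
  have hterm : ∀ j ∈ range R, (1 : ℝ) / 2 ≤ (eC (j * t)).re := by
    intro j hj
    rw [← eC_nat_mul_sub_int j t z, eC_re]
    have hj' : (j : ℝ) ≤ R := by exact_mod_cast (mem_range.1 hj).le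
    have hy : |2 * Real.pi * (j * (t - z))| ≤ 1 := by
      rw [abs_mul, abs_of_pos Real.two_pi_pos, abs_mul, abs_of_nonneg (by positivity : (0:ℝ) ≤ j)]
      calc 2 * Real.pi * (j * |t - z|) ≤ 2 * 4 * (R * (1 / (8 * R))) := by
            gcongr; exact Real.pi_le_four
        _ = 1 := by field_simp; norm_num
    have := Real.one_sub_sq_div_two_le_cos (x := 2 * Real.pi * (j * (t - z)))
    have h2 := (sq_le_one_iff_abs_le_one _).2 hy
    linarith
  calc (R : ℝ) / 2 = ∑ j ∈ range R, (1 : ℝ) / 2 := by simp; ring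
    _ ≤ ∑ j ∈ range R, (eC (j * t)).re := Finset.sum_le_sum hterm
    _ = (∑ j ∈ range R, eC (j * t)).re := (Complex.re_sum _ _).symm
    _ ≤ _ := Complex.re_le_norm _

open Classical in
/-- Points near integers are rare once the exponential sums at frequencies `1 ≤ k < R` are small:
the square of the Dirichlet kernel of length `R` is at least `R² / 4` at each such point. -/
lemma card_nearInt_le {R : ℕ} (hR : 1 ≤ R) (T : Finset ℕ) (x : ℕ → ℝ) (N : ℝ) (hT : (#T : ℝ) ≤ N)
    (hx : ∀ k : ℕ, 1 ≤ k → k < R → ‖∑ n ∈ T, eC (k * x n)‖ ≤ N / R) :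
    (#(T.filter fun n => NearInt R (x n)) : ℝ) ≤ 8 * N / R := by
  have hRr : (1 : ℝ) ≤ R := by exact_mod_cast hR
  have hN : 0 ≤ N := le_trans (by positivity) hT
  have h1 := (abs_le.1 (almost_orthogonal T R (fun j n => j * x n) (N / R) (by
    intro l h hlh hh
    obtain ⟨d, rfl⟩ := Nat.exists_eq_add_of_lt hlh
    have := hx (d + 1) (by omega) (by omega)
    convert this using 5
    push_cast; ring) (by positivity))).2
  have h2 : (#(T.filter fun n => NearInt R (x n)) : ℝ) * (R / 2) ^ 2
      ≤ ∑ n ∈ T, ‖∑ j ∈ range R, eC (j * x n)‖ ^ 2 := by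
    rw [← nsmul_eq_mul]
    refine (Finset.card_nsmul_le_sum _ (fun n => ‖∑ j ∈ range R, eC (j * x n)‖ ^ 2) _ ?_).trans
      (Finset.sum_le_sum_of_subset_of_nonneg (Finset.filter_subset _ _) fun _ _ _ => by positivity)
    intro n hn
    have := norm_dirichlet_lower hR (Finset.mem_filter.1 hn).2
    exact pow_le_pow_left₀ (by positivity) this 2
  have h3 : (R : ℝ) ^ 2 * (N / R) = R * N := by field_simp
  have h4 : (#(T.filter fun n => NearInt R (x n)) : ℝ) * (R / 2) ^ 2 ≤ 2 * R * N := by nlinarith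
  rw [le_div_iff₀ (by positivity)]
  have : (#(T.filter fun n => NearInt R (x n)) : ℝ) * R * R ≤ (8 * N) * R := by nlinarith
  exact le_of_mul_le_mul_right this (by positivity)

/-- The weights `|∑_{j<K} e(j (t - q/K))|² / K²` of Fejér interpolation at the nodes `q/K`. -/
def fejerWeight (K : ℕ) (t : ℝ) (q : ℕ) : ℝ :=
  ‖∑ j ∈ range K, eC (j * (t - q / K))‖ ^ 2 / K ^ 2

lemma fejerWeight_nonneg (K : ℕ) (t : ℝ) (q : ℕ) : 0 ≤ fejerWeight K t q := by
  unfold fejerWeight; positivity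

lemma fejerWeight_fract (K : ℕ) (t : ℝ) (q : ℕ) :
    fejerWeight K (Int.fract t) q = fejerWeight K t q := by
  unfold fejerWeight
  have : ∀ j : ℕ, eC (j * (Int.fract t - q / K)) = eC (j * (t - q / K)) := fun j => by
    rw [← eC_nat_mul_sub_int j (t - q / K) ⌊t⌋, ← Int.self_sub_floor]; congr 1; ring
  simp_rw [this]

/-- The Fejér weights sum to one, by orthogonality of the characters of `ℤ/Kℤ`. -/
lemma sum_fejerWeight {K : ℕ} (hK : 1 ≤ K) (t : ℝ) : ∑ q ∈ range K, fejerWeight K t q = 1 := by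
  have hKr : (0 : ℝ) < K := by exact_mod_cast hK
  have h := almost_orthogonal (range K) K (fun j q => j * (t - q / K)) 0 (by
    intro l h hlh hh
    have hd : 0 < h - l := by omega
    have e : ∀ n : ℕ, (h : ℝ) * (t - n / K) - l * (t - n / K)
        = (h - l) * t + n * (-((h - l) / K)) := fun n => by ring
    simp_rw [e, eC_add, eC_nat_mul]
    rw [← Finset.mul_sum]
    set w := eC (-(((h : ℝ) - l) / K)) with hw
    have hw1 : w ≠ 1 := by
      intro h1
      have hlr : (l : ℝ) + 1 ≤ h := by exact_mod_cast hlh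
      have hhr : (h : ℝ) + 1 ≤ K := by exact_mod_cast hh
      have hl0 : (0 : ℝ) ≤ l := by positivity
      have hy : |-(((h : ℝ) - l) / K)| = ((h : ℝ) - l) / K := by
        rw [abs_neg, abs_of_nonneg (div_nonneg (by linarith) hKr.le)]
      have := le_norm_eC_sub_one (x := -(((h : ℝ) - l) / K)) (y := 1 / K) (by positivity)
        (by rw [hy]; gcongr; linarith)
        (by rw [hy, le_sub_iff_add_le, ← add_div, div_le_one hKr]; linarith)
      rw [← hw, h1, sub_self, norm_zero] at this
      have h2 : (0 : ℝ) < 4 * (1 / K) := by positivity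
      linarith
    have hwK : w ^ K = 1 := by
      rw [hw, ← eC_nat_mul]
      have : (K : ℝ) * -(((h : ℝ) - l) / K) = ((l - h : ℤ) : ℝ) := by
        push_cast; field_simp; ring
      rw [this, eC_int]
    rw [geom_sum_eq hw1, hwK]; simp) le_rfl
  rw [mul_zero, card_range] at h
  have h' := abs_nonpos_iff.1 h
  unfold fejerWeight
  rw [← Finset.sum_div, div_eq_one_iff_eq (by positivity)]
  linarith

/-- The Fejér interpolant, from its values at the nodes `q/K`, of the `1`-periodic function
`t ↦ e(-ξ {t})`. It is a trigonometric polynomial in `t` of degree less than `K`. -/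
def fejerInterp (K : ℕ) (ξ t : ℝ) : ℂ :=
  ∑ q ∈ range K, (fejerWeight K t q : ℂ) * eC (-(ξ * (q / K)))

lemma norm_fejerInterp_le {K : ℕ} (hK : 1 ≤ K) (ξ t : ℝ) : ‖fejerInterp K ξ t‖ ≤ 1 := by
  rw [← sum_fejerWeight hK t]
  refine (norm_sum_le _ _).trans (Finset.sum_le_sum fun q _ => ?_)
  rw [norm_mul, norm_eC, mul_one, Complex.norm_real, Real.norm_of_nonneg (fejerWeight_nonneg _ _ _)]

lemma exists_fejerInterp_eq {K : ℕ} (hK : 1 ≤ K) (ξ : ℝ) :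
    ∃ a : ℕ × ℕ → ℂ, (∀ p, ‖a p‖ ≤ 1 / K) ∧ ∀ t : ℝ, fejerInterp K ξ t
      = ∑ p ∈ range K ×ˢ range K, a p * eC (((p.1 : ℝ) - p.2) * t) := by
  have hKr : (0 : ℝ) < K := by exact_mod_cast hK
  refine ⟨fun p => ∑ q ∈ range K, (1 / (K : ℂ) ^ 2) *
    eC (-(((p.1 : ℝ) - p.2) * (q / K)) + -(ξ * (q / K))), fun p => ?_, fun t => ?_⟩
  · refine (norm_sum_le _ _).trans ?_
    simp only [norm_mul, norm_eC, mul_one, norm_div, norm_one, norm_pow, Complex.norm_natCast,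
      sum_const, card_range, nsmul_eq_mul]
    apply le_of_eq; field_simp
  · unfold fejerInterp fejerWeight
    simp_rw [Complex.ofReal_div, normSq_sum_eC]
    simp_rw [Finset.sum_mul]
    rw [Finset.sum_comm]
    refine Finset.sum_congr rfl fun q _ => ?_
    rw [Finset.sum_product, Finset.sum_div, Finset.sum_mul]
    refine Finset.sum_congr rfl fun h _ => ?_
    rw [Finset.sum_div, Finset.sum_mul]
    refine Finset.sum_congr rfl fun l _ => ?_
    have e : (h : ℝ) * (t - q / K) - l * (t - q / K)
      = ((h : ℝ) - l) * t + -(((h : ℝ) - l) * (q / K)) := by ring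
    rw [e, eC_add, eC_add]
    push_cast
    ring

lemma fejerWeight_le {K : ℕ} (hK : 1 ≤ K) {t η : ℝ} {q : ℕ} (hη : 0 < η)
    (h1 : η ≤ |t - q / K|) (h2 : |t - q / K| ≤ 1 - η) :
    fejerWeight K t q ≤ 1 / (4 * η ^ 2 * K ^ 2) := by
  have hKr : (0 : ℝ) < K := by exact_mod_cast hK
  have hlow := le_norm_eC_sub_one hη.le h1 h2
  have hne : eC (t - q / K) ≠ 1 := fun h => by
    rw [h, sub_self, norm_zero] at hlow; linarith
  have hD : ‖∑ j ∈ range K, eC (j * (t - q / K))‖ ≤ 1 / (2 * η) := by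
    simp_rw [eC_nat_mul]
    rw [geom_sum_eq hne, norm_div]
    have : ‖eC (t - q / K) ^ K - 1‖ ≤ 2 := by
      refine (norm_sub_le _ _).trans ?_
      rw [norm_pow, norm_eC, one_pow, norm_one]; norm_num
    calc _ ≤ 2 / (4 * η) := by gcongr
      _ = _ := by field_simp; norm_num
  unfold fejerWeight
  calc _ ≤ (1 / (2 * η)) ^ 2 / (K : ℝ) ^ 2 := by gcongr
    _ = _ := by field_simp; norm_num

/-- Away from its jumps at the integers, `e(-ξ {t})` is well approximated by its interpolant. Nodes
within `η = 1/(8R)` of `{t}` contribute `O(η)` by the Lipschitz bound on `[0, 1)`; the others have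
weight at most `1 / (4 η² K²)`, also across the jump, since `{t}` is at distance at least `η` from
`0` and `1`. -/
lemma norm_sub_fejerInterp_le {R : ℕ} (hR : 1 ≤ R) {ξ : ℝ} (hξ : |ξ| ≤ 1 / 2) {t : ℝ}
    (ht : ¬ NearInt R t) :
    ‖eC (-(ξ * Int.fract t)) - fejerInterp (16 * R ^ 3) ξ t‖ ≤ 4 / R := by
  have hRr : (1 : ℝ) ≤ R := by exact_mod_cast hR
  set K := 16 * R ^ 3 with hK
  have hK1 : 1 ≤ K := by have := Nat.pow_pos (n := 3) hR; omega
  have hKr : (0 : ℝ) < K := by exact_mod_cast hK1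
  have hKR : (K : ℝ) = 16 * R ^ 3 := by rw [hK]; push_cast; ring
  unfold NearInt at ht
  push Not at ht
  obtain ⟨ht1, ht2⟩ := ht
  set s := Int.fract t with hs
  set η : ℝ := 1 / (8 * R) with hη
  have hη0 : 0 < η := by positivity
  have hs1 : s < 1 := Int.fract_lt_one t
  have hw1 := sum_fejerWeight hK1 s
  have e : eC (-(ξ * s)) - fejerInterp K ξ t
      = ∑ q ∈ range K, (fejerWeight K s q : ℂ) * (eC (-(ξ * s)) - eC (-(ξ * (q / K)))) := by
    unfold fejerInterp
    simp_rw [mul_sub, Finset.sum_sub_distrib]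
    rw [← Finset.sum_mul, ← Complex.ofReal_sum, hw1]
    simp_rw [hs, fejerWeight_fract]
    simp
  rw [e]
  have hterm : ∀ q ∈ range K,
      ‖(fejerWeight K s q : ℂ) * (eC (-(ξ * s)) - eC (-(ξ * (q / K))))‖
        ≤ Real.pi * (η * fejerWeight K s q + 1 / (4 * η ^ 2 * K ^ 2)) := by
    intro q hq
    have hw0 := fejerWeight_nonneg K s q
    have hqK : (q : ℝ) / K < 1 := by
      rw [div_lt_one hKr]; exact_mod_cast mem_range.1 hq
    have hqK0 : 0 ≤ (q : ℝ) / K := by positivity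
    rw [norm_mul, Complex.norm_real, Real.norm_of_nonneg hw0]
    have h1 : ‖eC (-(ξ * s)) - eC (-(ξ * (q / K)))‖ ≤ Real.pi * |s - q / K| := by
      refine (norm_eC_sub_le _ _).trans ?_
      have : -(ξ * s) - -(ξ * (q / K)) = -(ξ * (s - q / K)) := by ring
      rw [this, abs_neg, abs_mul]
      calc 2 * Real.pi * (|ξ| * |s - q / K|) ≤ 2 * Real.pi * (1 / 2 * |s - q / K|) := by
            gcongr
        _ = _ := by ring
    have hbd : |s - q / K| ≤ 1 - η := by
      rw [abs_le]; constructor <;> linarith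
    have h2 : fejerWeight K s q * |s - q / K|
        ≤ η * fejerWeight K s q + 1 / (4 * η ^ 2 * K ^ 2) := by
      rcases le_total |s - q / K| η with h | h
      · have : 0 ≤ 1 / (4 * η ^ 2 * (K : ℝ) ^ 2) := by positivity
        nlinarith
      · have := fejerWeight_le hK1 hη0 h hbd
        have h0 : 0 ≤ η * fejerWeight K s q := by positivity
        nlinarith
    calc fejerWeight K s q * ‖eC (-(ξ * s)) - eC (-(ξ * (q / K)))‖
        ≤ fejerWeight K s q * (Real.pi * |s - q / K|) := by gcongr
      _ = Real.pi * (fejerWeight K s q * |s - q / K|) := by ring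
      _ ≤ _ := by gcongr
  refine (norm_sum_le _ _).trans ((Finset.sum_le_sum hterm).trans ?_)
  rw [← Finset.mul_sum, Finset.sum_add_distrib, ← Finset.mul_sum, hw1, Finset.sum_const,
    card_range, nsmul_eq_mul]
  have e2 : (K : ℝ) * (1 / (4 * η ^ 2 * K ^ 2)) = 1 / R := by
    rw [hKR, hη]; field_simp; norm_num
  rw [e2, hη]
  have e3 : Real.pi * (1 / (8 * R) * 1 + 1 / R) = (Real.pi * (9 / 8)) / R := by field_simp; ring
  rw [e3]
  gcongr
  linarith [Real.pi_lt_d2]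

/-! ### Removal of the floor -/

lemma norm_prod_sub_prod_le' {ι : Type*} (s : Finset ι) (a b : ι → ℂ) (ha : ∀ i, ‖a i‖ ≤ 1)
    (hb : ∀ i, ‖b i‖ ≤ 1) : ‖∏ i ∈ s, a i - ∏ i ∈ s, b i‖ ≤ ∑ i ∈ s, ‖a i - b i‖ := by
  classical
  induction s using Finset.induction_on with
  | empty => simp
  | insert i s hi ih =>
    rw [Finset.prod_insert hi, Finset.prod_insert hi, Finset.sum_insert hi]
    have e : a i * ∏ i ∈ s, a i - b i * ∏ i ∈ s, b i
        = (a i - b i) * ∏ i ∈ s, a i + b i * (∏ i ∈ s, a i - ∏ i ∈ s, b i) := by ring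
    have h1 : ‖∏ i ∈ s, a i‖ ≤ 1 := by
      rw [norm_prod]; exact Finset.prod_le_one (fun _ _ => norm_nonneg _) fun j _ => ha j
    rw [e]
    refine (norm_add_le _ _).trans (add_le_add ?_ ?_)
    · rw [norm_mul]; exact mul_le_of_le_one_right (norm_nonneg _) h1
    · rw [norm_mul]; exact (mul_le_of_le_one_left (norm_nonneg _) (hb i)).trans ih

/-- The `L¹` error of Fejér interpolation along `n^c`: points not near an integer contribute `4/R`
each, and the remaining ones, at most `8N/R` in number, contribute at most `2` each. -/
lemma sum_fejer_error (c : ℝ) (hc : 0 < c) (hint : ∀ k : ℤ, c ≠ k) :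
    ∃ A : ℕ, 1 ≤ A ∧ ∀ R N : ℕ, 1 ≤ R → A * R ^ A ≤ N → ∀ ξ : ℝ, |ξ| ≤ 1 / 2 →
      ∑ n ∈ Ico (N / 2 + 1) (N + 1),
        ‖eC (-(ξ * Int.fract ((n : ℝ) ^ c))) - fejerInterp (16 * R ^ 3) ξ ((n : ℝ) ^ c)‖
        ≤ 20 * N / R := by
  classical
  obtain ⟨A, hA, hW⟩ := weyl_pow c hc hint
  refine ⟨A, hA, fun R N hR hN ξ hξ => ?_⟩
  have hRr : (1 : ℝ) ≤ R := by exact_mod_cast hR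
  have hK1 : 1 ≤ 16 * R ^ 3 := by have := Nat.pow_pos (n := 3) hR; omega
  set T := Ico (N / 2 + 1) (N + 1) with hT
  have hTN : (#T : ℝ) ≤ N := by
    rw [hT, Nat.card_Ico]; exact_mod_cast (by omega)
  have hcount := card_nearInt_le hR T (fun n => (n : ℝ) ^ c) N hTN (by
    intro k hk hkR
    have := hW (1 / R) (by positivity) (by rw [div_le_one (by positivity)]; exact hRr) N k hk
      (by rw [mul_one_div, div_le_one (by positivity)]; exact_mod_cast hkR.le)
      (by
        rw [one_div, inv_pow, inv_mul_eq_div, le_div_iff₀ (by positivity)]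
        exact_mod_cast hN)
    rwa [one_div, inv_mul_eq_div] at this)
  have hterm : ∀ n ∈ T,
      ‖eC (-(ξ * Int.fract ((n : ℝ) ^ c))) - fejerInterp (16 * R ^ 3) ξ ((n : ℝ) ^ c)‖
        ≤ 4 / R + if NearInt R ((n : ℝ) ^ c) then 2 else 0 := by
    intro n _
    split_ifs with h
    · have h1 := norm_sub_le (eC (-(ξ * Int.fract ((n : ℝ) ^ c))))
        (fejerInterp (16 * R ^ 3) ξ ((n : ℝ) ^ c))
      have h2 := norm_fejerInterp_le hK1 ξ ((n : ℝ) ^ c)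
      rw [norm_eC] at h1
      have : (0 : ℝ) ≤ 4 / R := by positivity
      linarith
    · rw [add_zero]; exact norm_sub_fejerInterp_le hR hξ h
  refine (Finset.sum_le_sum hterm).trans ?_
  rw [Finset.sum_add_distrib, ← Finset.sum_filter, Finset.sum_const, Finset.sum_const,
    nsmul_eq_mul, nsmul_eq_mul]
  calc _ ≤ (N : ℝ) * (4 / R) + (8 * N / R) * 2 := by gcongr
    _ = _ := by ring

lemma sum_upper_half (N : ℕ) (g : ℕ → ℂ) :
    (∑ n ∈ Finset.Icc 1 N, if N < 2 * n then g n else 0) = ∑ n ∈ Ico (N / 2 + 1) (N + 1), g n := by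
  rw [← Finset.sum_filter]
  congr 1
  ext n
  simp only [Finset.mem_filter, Finset.mem_Icc, Finset.mem_Ico]
  omega

/-- Expanding the product of interpolants gives `K^(2m)` shifted exponential sums with coefficients
of size at most `K^(-m)`; hence one of the shifted sums is large if the left-hand side is. -/
lemma exists_large_shift {m : ℕ} (c ξ : Fin m → ℝ) (T : Finset ℕ) {K : ℕ} (hK : 1 ≤ K) (b : ℝ)
    (hb : ∀ k : Fin m → ℤ, (∀ i, |(k i : ℝ)| ≤ K) →
      ‖∑ n ∈ T, eC (∑ i, (ξ i + (k i : ℝ)) * (n : ℝ) ^ c i)‖ ≤ b) :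
    ‖∑ n ∈ T, eC (∑ i, ξ i * (n : ℝ) ^ c i) * ∏ i, fejerInterp K (ξ i) ((n : ℝ) ^ c i)‖
      ≤ (K : ℝ) ^ m * b := by
  have hKr : (0 : ℝ) < K := by exact_mod_cast hK
  choose a ha hfa using fun i => exists_fejerInterp_eq hK (ξ i)
  have e : ∑ n ∈ T, eC (∑ i, ξ i * (n : ℝ) ^ c i) * ∏ i, fejerInterp K (ξ i) ((n : ℝ) ^ c i)
      = ∑ x ∈ Fintype.piFinset (fun _ : Fin m => range K ×ˢ range K), (∏ i, a i (x i)) *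
        ∑ n ∈ T, eC (∑ i, (ξ i + ((((x i).1 : ℤ) - ((x i).2 : ℤ) : ℤ) : ℝ)) * (n : ℝ) ^ c i) := by
    simp_rw [hfa, Finset.prod_univ_sum, Finset.mul_sum]
    rw [Finset.sum_comm]
    refine Finset.sum_congr rfl fun x _ => Finset.sum_congr rfl fun n _ => ?_
    rw [Finset.prod_mul_distrib, ← eC_sum, mul_left_comm, ← eC_add, ← Finset.sum_add_distrib]
    congr 3
    funext i
    push_cast; ring
  rw [e]
  have hterm : ∀ x ∈ Fintype.piFinset (fun _ : Fin m => range K ×ˢ range K),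
      ‖(∏ i, a i (x i)) *
        ∑ n ∈ T, eC (∑ i, (ξ i + ((((x i).1 : ℤ) - ((x i).2 : ℤ) : ℤ) : ℝ)) * (n : ℝ) ^ c i)‖
        ≤ (1 / K) ^ m * b := by
    intro x hx
    rw [norm_mul, norm_prod]
    gcongr
    · calc ∏ i, ‖a i (x i)‖ ≤ ∏ _i : Fin m, (1 / K : ℝ) :=
          Finset.prod_le_prod (fun _ _ => norm_nonneg _) fun i _ => ha i _
        _ = _ := by simp
    · refine hb (fun i => ((x i).1 : ℤ) - ((x i).2 : ℤ)) fun i => ?_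
      have hxi := Finset.mem_product.1 (Fintype.mem_piFinset.1 hx i)
      have h1 : ((x i).1 : ℝ) ≤ K := by exact_mod_cast (mem_range.1 hxi.1).le
      have h2 : ((x i).2 : ℝ) ≤ K := by exact_mod_cast (mem_range.1 hxi.2).le
      have h3 : (0 : ℝ) ≤ (x i).1 := by positivity
      have h4 : (0 : ℝ) ≤ (x i).2 := by positivity
      push_cast
      rw [abs_le]; constructor <;> linarith
  refine (norm_sum_le _ _).trans ((Finset.sum_le_sum hterm).trans ?_)
  rw [Finset.sum_const, Fintype.card_piFinset, nsmul_eq_mul]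
  simp only [card_product, card_range, prod_const, card_univ, Fintype.card_fin]
  apply le_of_eq
  push_cast
  rw [← mul_assoc, ← mul_pow]
  congr 2
  field_simp

/-- removal of the floor function, Theorem 4.3 of the
paper: for non-integer `0 < c₁ < ⋯ < c_m` there is `C > 0` such that for
every `N ≥ 1`, `δ ∈ (0,1]`, and `ξ₁,…,ξ_m ∈ [−1/2,1/2)`, if
`δ ≤ |m_{N;ℤ}(ξ)|` then either `N ≤ C δ^{−C}` or there exist integers
`k₁,…,k_m` with `|k_i| ≤ C δ^{−C}` such that
`δ^C/C ≤ |(1/N) ∑_{n=1}^N 1_{n>N/2} e((ξ₁+k₁)n^{c₁}+⋯+(ξ_m+k_m)n^{c_m})|`. -/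
theorem stmt11 {m : ℕ} (hm : 0 < m) (c : Fin m → ℝ)
    (hpos : ∀ i, 0 < c i) (hmono : StrictMono c)
    (hint : ∀ i, ∀ k : ℤ, c i ≠ (k : ℝ)) :
    ∃ C : ℝ, 0 < C ∧ ∀ N : ℕ, 1 ≤ N → ∀ δ : ℝ, 0 < δ → δ ≤ 1 →
      ∀ ξ : Fin m → ℝ, (∀ i, ξ i ∈ Set.Ico (-(1/2) : ℝ) (1/2)) →
        δ ≤ ‖mZ m c N ξ‖ →
        (N : ℝ) ≤ C * δ ^ (-C) ∨
          ∃ k : Fin m → ℤ, (∀ i, |(k i : ℝ)| ≤ C * δ ^ (-C)) ∧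
            δ ^ C / C ≤ ‖(N : ℂ)⁻¹ * ∑ n ∈ Finset.Icc 1 N,
              (if N < 2 * n then
                eC (∑ i, (ξ i + (k i : ℝ)) * (n : ℝ) ^ c i) else 0)‖ := by
  choose A hA hE using fun i => sum_fejer_error (c i) (hpos i) (hint i)
  set A' := ∑ i, A i with hA'
  have hAle : ∀ i, A i ≤ A' := fun i => Finset.single_le_sum (fun _ _ => Nat.zero_le _) (mem_univ i)
  set D := 41 * m with hD
  set C := A' * D ^ A' + A' + 16 * D ^ 3 + 3 + 2 * (16 * D ^ 3) ^ m + (3 * m + 1) with hC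
  refine ⟨C, by rw [hC]; positivity, ?_⟩
  intro N hN δ hδ hδ1 ξ hξ hlarge
  have hδi : 1 ≤ δ⁻¹ := (one_le_inv₀ hδ).2 hδ1
  have hneg : δ ^ (-(C : ℝ)) = (δ⁻¹) ^ C := by
    rw [Real.rpow_neg hδ.le, Real.rpow_natCast, inv_pow]
  rw [hneg, Real.rpow_natCast]
  have hcomp : ∀ X e : ℕ, X ≤ C → e ≤ C → (X : ℝ) * δ⁻¹ ^ e ≤ C * δ⁻¹ ^ C := by
    intro X e hX he
    gcongr
  have hmr : (1 : ℝ) ≤ m := by exact_mod_cast hm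
  have hNr : (0 : ℝ) < N := by exact_mod_cast hN
  have hξ' : ∀ i, |ξ i| ≤ 1 / 2 := fun i => abs_le.2 ⟨by linarith [(hξ i).1], (hξ i).2.le⟩
  -- `20 m N / R ≤ δ N / 2` fixes the size of `R`; the Weyl bounds need `N` to exceed a power of `R`.
  set R := ⌈40 * m / δ⌉₊ with hR
  have hRlow : 40 * m / δ ≤ R := Nat.le_ceil _
  have hR1 : 1 ≤ R := Nat.one_le_iff_ne_zero.2 (Nat.ceil_pos.2 (by positivity)).ne'
  have hRr : (0 : ℝ) < R := by exact_mod_cast hR1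
  have hRup : (R : ℝ) ≤ D * δ⁻¹ := by
    have h1 := (Nat.ceil_lt_add_one (a := 40 * m / δ) (by positivity)).le
    refine h1.trans ?_
    rw [hD]; push_cast; rw [div_eq_mul_inv]; nlinarith
  by_cases hNR : A' * R ^ A' ≤ N
  swap
  · left
    push Not at hNR
    calc (N : ℝ) ≤ A' * (R : ℝ) ^ A' := by exact_mod_cast hNR.le
      _ ≤ A' * (D * δ⁻¹) ^ A' := by gcongr
      _ = ((A' * D ^ A' : ℕ) : ℝ) * δ⁻¹ ^ A' := by push_cast; rw [mul_pow]; ring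
      _ ≤ _ := hcomp _ _ (by omega) (by omega)
  right
  by_contra! hcon
  set K := 16 * R ^ 3 with hK
  have hK1 : 1 ≤ K := by have := Nat.pow_pos (n := 3) hR1; omega
  have hKup : (K : ℝ) ≤ ((16 * D ^ 3 : ℕ) : ℝ) * δ⁻¹ ^ 3 := by
    calc (K : ℝ) = 16 * (R : ℝ) ^ 3 := by rw [hK]; push_cast; ring
      _ ≤ 16 * (D * δ⁻¹) ^ 3 := by gcongr
      _ = _ := by push_cast; ring
  set T := Ico (N / 2 + 1) (N + 1) with hT
  have hscale : ∀ z : ℂ, ‖(N : ℂ)⁻¹ * z‖ = ‖z‖ / N := fun z => by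
    rw [norm_mul, norm_inv, Complex.norm_natCast, inv_mul_eq_div]
  simp_rw [sum_upper_half, hscale] at hcon
  set S₂ := ∑ n ∈ T, eC (∑ i, ξ i * (n : ℝ) ^ c i) * ∏ i, fejerInterp K (ξ i) ((n : ℝ) ^ c i)
    with hS₂
  have hpig : ‖S₂‖ ≤ (K : ℝ) ^ m * (δ ^ C / C * N) :=
    exists_large_shift c ξ T hK1 _ fun k hk => by
      have := hcon k fun i => (hk i).trans (hKup.trans (hcomp _ _ (by omega) (by omega)))
      rw [div_lt_iff₀ hNr] at this
      exact this.le
  unfold mZ at hlarge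
  rw [sum_upper_half, hscale, le_div_iff₀ hNr] at hlarge
  set S₁ := ∑ n ∈ T, eC (∑ i, ξ i * (⌊(n : ℝ) ^ c i⌋ : ℝ)) with hS₁
  have hS₁' : S₁ = ∑ n ∈ T, eC (∑ i, ξ i * (n : ℝ) ^ c i) *
      ∏ i, eC (-(ξ i * Int.fract ((n : ℝ) ^ c i))) := by
    refine Finset.sum_congr rfl fun n _ => ?_
    rw [← eC_sum, ← eC_add, ← Finset.sum_add_distrib]
    congr 2
    funext i
    rw [← Int.self_sub_floor]; ring
  have hdiff : ‖S₁ - S₂‖ ≤ δ * N / 2 := by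
    rw [hS₁', hS₂, ← Finset.sum_sub_distrib]
    calc _ ≤ ∑ n ∈ T, ∑ i, ‖eC (-(ξ i * Int.fract ((n : ℝ) ^ c i)))
              - fejerInterp K (ξ i) ((n : ℝ) ^ c i)‖ := by
          refine (norm_sum_le _ _).trans (Finset.sum_le_sum fun n _ => ?_)
          rw [← mul_sub, norm_mul, norm_eC, one_mul]
          exact norm_prod_sub_prod_le' _ _ _ (fun i => (norm_eC _).le)
            fun i => norm_fejerInterp_le hK1 _ _
      _ ≤ ∑ _i : Fin m, 20 * (N : ℝ) / R := by
          rw [Finset.sum_comm]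
          refine Finset.sum_le_sum fun i _ => hE i R N hR1 ?_ (ξ i) (hξ' i)
          exact (Nat.mul_le_mul (hAle i) (Nat.pow_le_pow_right hR1 (hAle i))).trans hNR
      _ = 20 * m * N / R := by simp; ring
      _ ≤ δ * N / 2 := by
          rw [div_le_iff₀ hδ] at hRlow
          rw [div_le_iff₀ hRr]
          nlinarith
  have hS₂low : δ * N / 2 ≤ ‖S₂‖ := by
    have := norm_sub_norm_le S₁ S₂
    linarith
  have hCr : (0 : ℝ) < C := by rw [hC]; positivity
  have hKm : (K : ℝ) ^ m * δ ^ C ≤ ((16 * D ^ 3) ^ m : ℕ) * δ := by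
    calc (K : ℝ) ^ m * δ ^ C ≤ (((16 * D ^ 3 : ℕ) : ℝ) * δ⁻¹ ^ 3) ^ m * δ ^ (3 * m + 1) := by
          gcongr ?_ * ?_
          · gcongr
          · exact pow_le_pow_of_le_one hδ.le hδ1 (by omega)
      _ = ((16 * D ^ 3) ^ m : ℕ) * δ * ((δ⁻¹ * δ) ^ (3 * m)) := by
          push_cast; rw [mul_pow, ← pow_mul, mul_pow, pow_succ]; ring
      _ = _ := by rw [inv_mul_cancel₀ hδ.ne']; simp
  have hClow : (2 : ℝ) * ((16 * D ^ 3) ^ m : ℕ) < C := by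
    exact_mod_cast (by omega : 2 * (16 * D ^ 3) ^ m < C)
  have hfin : (K : ℝ) ^ m * (δ ^ C / C * N) < δ * N / 2 := by
    have e : (K : ℝ) ^ m * (δ ^ C / C * N) = (K : ℝ) ^ m * δ ^ C * N / C := by ring
    rw [e, div_lt_iff₀ hCr]
    have hδN : 0 < δ * N := by positivity
    have h1 : (K : ℝ) ^ m * δ ^ C * N ≤ ((16 * D ^ 3) ^ m : ℕ) * δ * N := by gcongr
    nlinarith
  linarith

end
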